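/- For a, a', b > 0 and real t with t + a > 0 and t + b > 0, the following ₃F₂ transformation holds: ₃F₂(a+t,a,b;t+a+b,a+a';1)/(Γ(a')Γ(a+b+t)) = ₃F₂(a',a'-t,b;a'+b,a+a';1)/(Γ(a+t)Γ(a'+b)). -/

import Mathlib

open MeasureTheory ProbabilityTheory Real Set Filter Topology

noncomputable def gammaDens (p σ y : ℝ) : ℝ :=
  if 0 < y then σ ^ p / Real.Gamma p * Real.exp (-(σ * y)) * y ^ (p - 1) else 0

noncomputable def gammaM (p σ : ℝ) : Measure ℝ :=
  MeasureTheory.volume.withDensity fun y => ENNReal.ofReal (gammaDens p σ y)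

noncomputable def beta1Dens (p q x : ℝ) : ℝ :=
  if 0 < x ∧ x < 1 then
    Real.Gamma (p + q) / (Real.Gamma p * Real.Gamma q) * x ^ (p - 1) * (1 - x) ^ (q - 1)
  else 0

noncomputable def beta1 (p q : ℝ) : Measure ℝ :=
  MeasureTheory.volume.withDensity fun x => ENNReal.ofReal (beta1Dens p q x)

noncomputable def beta2Dens (p q y : ℝ) : ℝ :=
  if 0 < y then
    Real.Gamma (p + q) / (Real.Gamma p * Real.Gamma q) * y ^ (p - 1) * (1 + y) ^ (-(p + q))
  else 0

noncomputable def beta2 (p q : ℝ) : Measure ℝ :=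
  MeasureTheory.volume.withDensity fun y => ENNReal.ofReal (beta2Dens p q y)

/-- Pochhammer (rising factorial) symbol `(a)_n`. -/
noncomputable def poch (a : ℝ) (n : ℕ) : ℝ := ∏ i ∈ Finset.range n, (a + (i : ℝ))

/-- Gauss hypergeometric function `₂F₁(a,b;c;x)`. -/
noncomputable def F21 (a b c x : ℝ) : ℝ :=
  ∑' n : ℕ, poch a n * poch b n / ((n.factorial : ℝ) * poch c n) * x ^ n

/-- Generalized hypergeometric `₃F₂(a₁,a₂,a₃;b₁,b₂;1)` at unit argument. -/
noncomputable def F32one (a1 a2 a3 b1 b2 : ℝ) : ℝ :=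
  ∑' n : ℕ, poch a1 n * poch a2 n * poch a3 n /
    ((n.factorial : ℝ) * poch b1 n * poch b2 n)

/-- Normalizing constant of the real beta-hypergeometric distribution. -/
noncomputable def Cbh (a a' b : ℝ) : ℝ :=
  Real.Gamma (a + b) / (Real.Gamma a * Real.Gamma b * F32one a a b (a + b) (a + a'))

noncomputable def bhDens (a a' b x : ℝ) : ℝ :=
  if 0 < x ∧ x < 1 then
    Cbh a a' b * x ^ (a - 1) * (1 - x) ^ (b - 1) * F21 a b (a + a') x
  else 0

/-- The real beta-hypergeometric distribution `μ_{a,a',b}`. -/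
noncomputable def bhMeasure (a a' b : ℝ) : Measure ℝ :=
  MeasureTheory.volume.withDensity fun x => ENNReal.ofReal (bhDens a a' b x)

/-!
Integrate Euler's transformation `F21 a b e x = (1 - x) ^ (e - a - b) * F21 (e - a) (e - b) e x`
term by term against `x ^ (c - 1) * (1 - x) ^ (d - c - 1)` on `(0, 1)`: each side becomes a Beta
function times a series `F32one`, which is Kummer's transformation of `F32one a b c d e`. Euler's
transformation is itself an identity of formal power series, since multiplication by
`(1 - X) ^ (e - a - b)` intertwines the two hypergeometric differential operators and a solution
of the hypergeometric equation is determined by its constant coefficient.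
-/

lemma poch_zero (a : ℝ) : poch a 0 = 1 := Finset.prod_range_zero _

lemma poch_succ (a : ℝ) (n : ℕ) : poch a (n + 1) = poch a n * (a + n) :=
  Finset.prod_range_succ _ n

lemma poch_one (n : ℕ) : poch 1 n = n.factorial := by
  induction n with
  | zero => simp only [poch_zero, Nat.factorial_zero, Nat.cast_one]
  | succ n ih => rw [poch_succ, ih, Nat.factorial_succ]; push_cast; ring

lemma ne_neg_natCast_of_pos {a : ℝ} (ha : 0 < a) (k : ℕ) : a ≠ -k := by
  have : (0 : ℝ) ≤ k := k.cast_nonneg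
  linarith

lemma add_natCast_ne_zero {a : ℝ} (ha : ∀ k : ℕ, a ≠ -k) (n : ℕ) : a + n ≠ 0 :=
  fun h => ha n (eq_neg_of_add_eq_zero_left h)

lemma poch_ne_zero {a : ℝ} (ha : ∀ k : ℕ, a ≠ -k) (n : ℕ) : poch a n ≠ 0 :=
  Finset.prod_ne_zero_iff.2 fun k _ => add_natCast_ne_zero ha k

lemma poch_neg_natCast_eq_zero {k n : ℕ} (h : k < n) : poch (-k) n = 0 :=
  Finset.prod_eq_zero (Finset.mem_range.2 h) (neg_add_cancel _)

lemma poch_pos {a : ℝ} (ha : 0 < a) (n : ℕ) : 0 < poch a n :=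
  Finset.prod_pos fun _ _ => by positivity

lemma Gamma_add_natCast {a : ℝ} (ha : ∀ k : ℕ, a ≠ -k) (n : ℕ) :
    Gamma (a + n) = poch a n * Gamma a := by
  induction n with
  | zero => simp only [poch_zero, Nat.cast_zero, add_zero, one_mul]
  | succ n ih =>
    rw [poch_succ, Nat.cast_succ, ← add_assoc, Gamma_add_one (add_natCast_ne_zero ha n), ih]
    ring

lemma beta_add_natCast {u v : ℝ} (hu : ∀ k : ℕ, u ≠ -k) (huv : ∀ k : ℕ, u + v ≠ -k) (n : ℕ) :
    beta (u + n) v = beta u v * (poch u n / poch (u + v) n) := by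
  unfold beta
  rw [add_right_comm, Gamma_add_natCast hu, Gamma_add_natCast huv]
  ring

lemma tendsto_poch_div (a : ℝ) :
    Tendsto (fun n : ℕ => poch a n / ((n : ℝ) ^ (a - 1) * n.factorial)) atTop
      (𝓝 (Gamma a)⁻¹) := by
  by_cases ha : ∀ k : ℕ, a ≠ -k
  · have h := ((GammaSeq_tendsto_Gamma a).inv₀ (Gamma_ne_zero ha)).mul
      (tendsto_natCast_div_add_atTop a)
    rw [mul_one] at h
    refine h.congr' ?_
    filter_upwards [eventually_gt_atTop 0] with n hn
    have hn₀ : (0 : ℝ) < n := Nat.cast_pos.2 hn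
    have hna : a + n ≠ 0 := add_natCast_ne_zero ha n
    have hGammaSeq : GammaSeq a n = (n : ℝ) ^ a * n.factorial / poch a (n + 1) := rfl
    rw [hGammaSeq, poch_succ, rpow_sub_one hn₀.ne', add_comm (n : ℝ) a]
    field_simp
  · push Not at ha
    obtain ⟨k, rfl⟩ := ha
    rw [Gamma_neg_nat_eq_zero, inv_zero]
    refine tendsto_const_nhds.congr' ?_
    filter_upwards [eventually_gt_atTop k] with n hn
    rw [poch_neg_natCast_eq_zero hn, zero_div]

lemma isBigO_poch_div_poch (a : ℝ) {b : ℝ} (hb : ∀ k : ℕ, b ≠ -k) :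
    (fun n : ℕ => poch a n / poch b n) =O[atTop] fun n : ℕ => (n : ℝ) ^ (a - b) := by
  have hlim := (tendsto_poch_div a).div (tendsto_poch_div b) (inv_ne_zero (Gamma_ne_zero hb))
  have hmul := (hlim.isBigO_one ℝ).mul
    (Asymptotics.isBigO_refl (fun n : ℕ => (n : ℝ) ^ (a - b)) atTop)
  simp only [one_mul, Pi.div_apply] at hmul
  refine hmul.congr' ?_ .rfl
  filter_upwards [eventually_gt_atTop 0] with n hn
  have hn₀ : (0 : ℝ) < n := Nat.cast_pos.2 hn
  have hpow : (n : ℝ) ^ (a - 1) = (n : ℝ) ^ (b - 1) * (n : ℝ) ^ (a - b) := by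
    rw [← rpow_add hn₀]
    ring_nf
  have := poch_ne_zero hb n
  rw [hpow]
  field_simp

lemma summable_norm_mul_pow_of_isBigO_rpow {u : ℕ → ℝ} {r x : ℝ}
    (hu : u =O[atTop] fun n : ℕ => (n : ℝ) ^ r) (hx : |x| < 1) :
    Summable fun n => ‖u n * x ^ n‖ := by
  obtain ⟨k, hk⟩ := exists_nat_ge r
  refine summable_norm_mul_geometric_of_norm_lt_one' (k := k) hx (hu.trans ?_)
  refine Asymptotics.IsBigO.of_bound' ?_
  filter_upwards [eventually_ge_atTop 1] with n hn
  rw [norm_of_nonneg (by positivity), norm_of_nonneg (by positivity), Nat.cast_pow,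
    ← rpow_natCast]
  exact rpow_le_rpow_of_exponent_le (Nat.one_le_cast.2 hn) hk

/-- The coefficient of `x ^ n` in the Gauss series `F21 a b c x`. -/
noncomputable def gaussCoeff (a b c : ℝ) (n : ℕ) : ℝ :=
  poch a n * poch b n / (n.factorial * poch c n)

lemma gaussCoeff_zero (a b c : ℝ) : gaussCoeff a b c 0 = 1 := by
  simp [gaussCoeff, poch_zero]

lemma gaussCoeff_succ (a b : ℝ) {c : ℝ} (hc : ∀ k : ℕ, c ≠ -k) (n : ℕ) :
    (n + 1) * (c + n) * gaussCoeff a b c (n + 1) = (a + n) * (b + n) * gaussCoeff a b c n := by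
  have hcn := add_natCast_ne_zero hc n
  have := poch_ne_zero hc n
  simp only [gaussCoeff, poch_succ, Nat.factorial_succ]
  push_cast
  field_simp

lemma isBigO_gaussCoeff (a b : ℝ) {c : ℝ} (hc : ∀ k : ℕ, c ≠ -k) :
    gaussCoeff a b c =O[atTop] fun n : ℕ => (n : ℝ) ^ (a + b - c - 1) := by
  refine ((isBigO_poch_div_poch a hc).mul
    (isBigO_poch_div_poch b (ne_neg_natCast_of_pos one_pos))).congr' (.of_eq ?_) ?_
  · funext n
    rw [gaussCoeff, poch_one]
    ring
  · filter_upwards [eventually_gt_atTop 0] with n hn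
    rw [← rpow_add (Nat.cast_pos.2 hn)]
    ring_nf

lemma summable_norm_gaussCoeff_mul_pow (a b : ℝ) {c : ℝ} (hc : ∀ k : ℕ, c ≠ -k) {x : ℝ}
    (hx : |x| < 1) : Summable fun n => ‖gaussCoeff a b c n * x ^ n‖ :=
  summable_norm_mul_pow_of_isBigO_rpow (isBigO_gaussCoeff a b hc) hx

lemma summable_gaussCoeff_mul_poch_div_poch {a b c d e : ℝ} (hd : ∀ k : ℕ, d ≠ -k)
    (he : ∀ k : ℕ, e ≠ -k) (h : a + b + c < d + e) :
    Summable fun n => gaussCoeff a b e n * (poch c n / poch d n) := by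
  refine summable_of_isBigO_nat (summable_nat_rpow.2 (by linarith : a + b + c - d - e - 1 < -1))
    (((isBigO_gaussCoeff a b he).mul (isBigO_poch_div_poch c hd)).congr' .rfl ?_)
  filter_upwards [eventually_gt_atTop 0] with n hn
  rw [← rpow_add (Nat.cast_pos.2 hn)]
  ring_nf

lemma F32one_eq_tsum_gaussCoeff (a b c d e : ℝ) :
    F32one a b c d e = ∑' n, gaussCoeff a b e n * (poch c n / poch d n) :=
  tsum_congr fun n => by rw [gaussCoeff]; ring

section FormalHypergeometricEquation

open PowerSeries

lemma coeff_X_mul_derivative {R : Type*} [CommSemiring R] (F : R⟦X⟧) (n : ℕ) :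
    coeff n (X * d⁄dX R F) = n * coeff n F := by
  cases n with
  | zero => simp
  | succ n => rw [coeff_succ_X_mul, coeff_derivative]; push_cast; ring

variable {R : Type*} [CommRing R]

/-- The operator of Gauss's hypergeometric differential equation, acting on formal power series;
it annihilates the series `F21 a b c`. -/
noncomputable def hypergeometricOp (a b c : R) (H : R⟦X⟧) : R⟦X⟧ :=
  X * (1 - X) * d⁄dX R (d⁄dX R H) + (C c - C (a + b + 1) * X) * d⁄dX R H - C (a * b) * H

lemma coeff_hypergeometricOp (a b c : R) (H : R⟦X⟧) (n : ℕ) :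
    coeff n (hypergeometricOp a b c H) =
      (n + 1) * (c + n) * coeff (n + 1) H - (a + n) * (b + n) * coeff n H := by
  -- In terms of the Euler operator `X * d⁄dX`, which acts diagonally on coefficients.
  have hEuler : hypergeometricOp a b c H =
      d⁄dX R (X * d⁄dX R H) + C (c - 1) * d⁄dX R H
        - (X * d⁄dX R (X * d⁄dX R H) + C (a + b) * (X * d⁄dX R H) + C (a * b) * H) := by
    simp only [hypergeometricOp, Derivation.leibniz, smul_eq_mul, derivative_X, map_add, map_sub,
      map_one]
    ring
  simp only [hEuler, map_sub (coeff n), map_add (coeff n), coeff_C_mul, coeff_X_mul_derivative,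
    coeff_derivative]
  push_cast
  ring

lemma isUnit_one_sub_X : IsUnit (1 - X : R⟦X⟧) :=
  .of_mul_eq_one_right _ (mk_one_mul_one_sub_eq_one R)

-- The hypothesis is the differential equation of `P = (1 - X) ^ (c - a - b)`.
lemma hypergeometricOp_mul {a b c : R} {P : R⟦X⟧}
    (hP : (1 - X) * d⁄dX R P = C (a + b - c) * P) (H : R⟦X⟧) :
    hypergeometricOp a b c (P * H) = P * hypergeometricOp (c - a) (c - b) c H := by
  have hP' : (1 - X) * d⁄dX R (d⁄dX R P) = C (a + b - c + 1) * d⁄dX R P := by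
    have h := congrArg (d⁄dX R) hP
    simp only [Derivation.leibniz, smul_eq_mul, derivative_X, derivative_C, map_sub (d⁄dX R),
      derivative_one] at h
    rw [map_add, map_one]
    linear_combination h
  refine isUnit_one_sub_X.mul_left_cancel ?_
  simp only [hypergeometricOp, Derivation.leibniz, smul_eq_mul, map_add, map_sub, map_one,
    map_mul] at hP hP' ⊢
  linear_combination X * (1 - X) * H * hP' +
    (X * (C a + C b - C c + 1) * H + 2 * X * (1 - X) * d⁄dX R H +
      (C c - (C a + C b + 1) * X) * H) * hP

lemma succ_mul_multichoose_succ [BinomialRing R] (r : R) (n : ℕ) :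
    (n + 1) * Ring.multichoose r (n + 1) = (r + n) * Ring.multichoose r n := by
  have := BinomialRing.toIsAddTorsionFree (R := R)
  refine nsmul_right_injective n.factorial_ne_zero ?_
  have hsucc := Ring.factorial_nsmul_multichoose_eq_ascPochhammer r (n + 1)
  rw [ascPochhammer_succ_right, Polynomial.smeval_mul, Polynomial.smeval_add,
    Polynomial.smeval_X, Polynomial.smeval_natCast,
    ← Ring.factorial_nsmul_multichoose_eq_ascPochhammer, Nat.factorial_succ] at hsucc
  simp only [nsmul_eq_mul, pow_one, pow_zero, mul_one] at hsucc ⊢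
  push_cast at hsucc
  linear_combination hsucc

lemma one_sub_X_mul_derivative_mk_multichoose [BinomialRing R] (r : R) :
    (1 - X) * d⁄dX R (mk (Ring.multichoose r)) = C r * mk (Ring.multichoose r) := by
  ext n
  rw [sub_mul, one_mul]
  simp only [map_sub (coeff n), coeff_X_mul_derivative, coeff_derivative, coeff_C_mul, coeff_mk]
  linear_combination succ_mul_multichoose_succ r n

lemma hypergeometricOp_mk_gaussCoeff (a b : ℝ) {c : ℝ} (hc : ∀ k : ℕ, c ≠ -k) :
    hypergeometricOp a b c (mk (gaussCoeff a b c)) = 0 := by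
  ext n
  rw [coeff_hypergeometricOp, coeff_mk, coeff_mk, gaussCoeff_succ a b hc, sub_self, map_zero]

lemma coeff_of_hypergeometricOp_eq_zero {a b c : ℝ} (hc : ∀ k : ℕ, c ≠ -k) {H : ℝ⟦X⟧}
    (hH : hypergeometricOp a b c H = 0) (n : ℕ) :
    coeff n H = constantCoeff H * gaussCoeff a b c n := by
  induction n with
  | zero => rw [gaussCoeff_zero, mul_one, coeff_zero_eq_constantCoeff_apply]
  | succ n ih =>
    have hcn := add_natCast_ne_zero hc n
    have hcoeff := coeff_hypergeometricOp a b c H n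
    rw [hH, map_zero, ih] at hcoeff
    refine mul_left_cancel₀ (mul_ne_zero n.cast_add_one_ne_zero hcn) ?_
    linear_combination -hcoeff - constantCoeff H * gaussCoeff_succ a b hc n

lemma sum_multichoose_mul_gaussCoeff (a b : ℝ) {c : ℝ} (hc : ∀ k : ℕ, c ≠ -k) (n : ℕ) :
    ∑ p ∈ Finset.HasAntidiagonal.antidiagonal n,
      Ring.multichoose (a + b - c) p.1 * gaussCoeff (c - a) (c - b) c p.2 =
        gaussCoeff a b c n := by
  have hker : hypergeometricOp a b c
      (mk (Ring.multichoose (a + b - c)) * mk (gaussCoeff (c - a) (c - b) c)) = 0 := by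
    rw [hypergeometricOp_mul (one_sub_X_mul_derivative_mk_multichoose _),
      hypergeometricOp_mk_gaussCoeff _ _ hc, mul_zero]
  simpa [coeff_mul, ← coeff_zero_eq_constantCoeff_apply, gaussCoeff_zero] using
    coeff_of_hypergeometricOp_eq_zero hc hker n

end FormalHypergeometricEquation

lemma hasSum_multichoose_mul_pow (r : ℝ) {x : ℝ} (hx : |x| < 1) :
    HasSum (fun n => Ring.multichoose r n * x ^ n) ((1 - x) ^ (-r)) := by
  have h := (one_div_one_sub_rpow_hasFPowerSeriesOnBall_zero r).hasSum (y := x)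
    (by simpa [enorm_eq_nnnorm, ← NNReal.coe_lt_coe] using hx)
  rw [rpow_neg (by linarith [(abs_lt.1 hx).2])]
  simpa [FormalMultilinearSeries.ofScalars_apply_eq, ← Ring.multichoose_eq, mul_comm] using h

theorem F21_euler_transformation (a b : ℝ) {c : ℝ} (hc : ∀ k : ℕ, c ≠ -k) {x : ℝ}
    (hx : |x| < 1) :
    F21 a b c x = (1 - x) ^ (c - a - b) * F21 (c - a) (c - b) c x := by
  have hbinom := hasSum_multichoose_mul_pow (a + b - c) hx
  calc
    F21 a b c x = ∑' n, gaussCoeff a b c n * x ^ n := rfl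
    _ = ∑' n, ∑ p ∈ Finset.HasAntidiagonal.antidiagonal n,
          Ring.multichoose (a + b - c) p.1 * x ^ p.1 *
            (gaussCoeff (c - a) (c - b) c p.2 * x ^ p.2) := by
      refine tsum_congr fun n => ?_
      rw [← sum_multichoose_mul_gaussCoeff a b hc n, Finset.sum_mul]
      refine Finset.sum_congr rfl fun p hp => ?_
      rw [← Finset.HasAntidiagonal.mem_antidiagonal.1 hp, pow_add]
      ring
    _ = (∑' n, Ring.multichoose (a + b - c) n * x ^ n) *
          ∑' n, gaussCoeff (c - a) (c - b) c n * x ^ n :=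
      (tsum_mul_tsum_eq_tsum_sum_antidiagonal_of_summable_norm hbinom.summable.norm
        (summable_norm_gaussCoeff_mul_pow _ _ hc hx)).symm
    _ = (1 - x) ^ (c - a - b) * F21 (c - a) (c - b) c x := by
      rw [hbinom.tsum_eq, neg_sub, sub_add_eq_sub_sub]
      rfl

section BetaIntegral

variable {u v : ℝ}

lemma betaPDFReal_eq_indicator (u v : ℝ) :
    betaPDFReal u v =
      (Ioo 0 1).indicator fun x => (beta u v)⁻¹ * (x ^ (u - 1) * (1 - x) ^ (v - 1)) := by
  funext x
  simp only [betaPDFReal, indicator_apply, mem_Ioo, one_div, mul_assoc]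

lemma betaPDFReal_nonneg (hu : 0 < u) (hv : 0 < v) (x : ℝ) : 0 ≤ betaPDFReal u v x := by
  by_cases hx : 0 < x ∧ x < 1
  · exact (betaPDFReal_pos hx.1 hx.2 hu hv).le
  · exact (if_neg hx).ge

lemma integrable_betaPDFReal (hu : 0 < u) (hv : 0 < v) : Integrable (betaPDFReal u v) :=
  (lintegral_ofReal_ne_top_iff_integrable (by fun_prop)
    (.of_forall (betaPDFReal_nonneg hu hv))).1
    ((lintegral_betaPDF_eq_one hu hv).trans_ne ENNReal.one_ne_top)

lemma integral_betaPDFReal (hu : 0 < u) (hv : 0 < v) : ∫ x, betaPDFReal u v x = 1 := by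
  rw [integral_eq_lintegral_of_nonneg_ae (.of_forall (betaPDFReal_nonneg hu hv)) (by fun_prop)]
  exact congrArg ENNReal.toReal (lintegral_betaPDF_eq_one hu hv)

lemma integrableOn_rpow_mul_one_sub_rpow (hu : 0 < u) (hv : 0 < v) :
    IntegrableOn (fun x : ℝ => x ^ (u - 1) * (1 - x) ^ (v - 1)) (Ioo 0 1) := by
  have h := integrable_betaPDFReal hu hv
  rw [betaPDFReal_eq_indicator, integrable_indicator_iff measurableSet_Ioo] at h
  exact (integrable_const_mul_iff (inv_ne_zero (beta_pos hu hv).ne').isUnit _).1 h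

lemma integral_rpow_mul_one_sub_rpow (hu : 0 < u) (hv : 0 < v) :
    ∫ x in Ioo (0 : ℝ) 1, x ^ (u - 1) * (1 - x) ^ (v - 1) = beta u v := by
  have h := integral_betaPDFReal hu hv
  rw [betaPDFReal_eq_indicator, integral_indicator measurableSet_Ioo, integral_const_mul] at h
  exact (inv_mul_eq_one₀ (beta_pos hu hv).ne').1 h |>.symm

lemma rpow_mul_one_sub_rpow_mul_pow (u v : ℝ) (n : ℕ) {x : ℝ} (hx : 0 < x) :
    x ^ (u - 1) * (1 - x) ^ (v - 1) * x ^ n = x ^ (u + n - 1) * (1 - x) ^ (v - 1) := by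
  rw [add_sub_right_comm, rpow_add_natCast hx.ne']
  ring

lemma integrableOn_rpow_mul_one_sub_rpow_mul_pow (hu : 0 < u) (hv : 0 < v) (n : ℕ) :
    IntegrableOn (fun x : ℝ => x ^ (u - 1) * (1 - x) ^ (v - 1) * x ^ n) (Ioo 0 1) :=
  (integrableOn_rpow_mul_one_sub_rpow (add_pos_of_pos_of_nonneg hu n.cast_nonneg) hv).congr_fun
    (fun _ hx => (rpow_mul_one_sub_rpow_mul_pow u v n hx.1).symm) measurableSet_Ioo

lemma integral_rpow_mul_one_sub_rpow_mul_pow (hu : 0 < u) (hv : 0 < v) (n : ℕ) :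
    ∫ x in Ioo (0 : ℝ) 1, x ^ (u - 1) * (1 - x) ^ (v - 1) * x ^ n =
      beta u v * (poch u n / poch (u + v) n) := by
  rw [← beta_add_natCast (ne_neg_natCast_of_pos hu) (ne_neg_natCast_of_pos (add_pos hu hv)),
    ← integral_rpow_mul_one_sub_rpow (by positivity) hv]
  exact setIntegral_congr_fun measurableSet_Ioo fun _ hx =>
    rpow_mul_one_sub_rpow_mul_pow u v n hx.1

lemma integral_rpow_mul_one_sub_rpow_mul_tsum (hu : 0 < u) (hv : 0 < v) {s : ℕ → ℝ}
    (hs : Summable fun n => s n * (poch u n / poch (u + v) n)) :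
    ∫ x in Ioo (0 : ℝ) 1, x ^ (u - 1) * (1 - x) ^ (v - 1) * ∑' n, s n * x ^ n =
      beta u v * ∑' n, s n * (poch u n / poch (u + v) n) := by
  let f : ℕ → ℝ → ℝ := fun n x => s n * (x ^ (u - 1) * (1 - x) ^ (v - 1) * x ^ n)
  have hint (n : ℕ) : IntegrableOn (f n) (Ioo 0 1) :=
    (integrableOn_rpow_mul_one_sub_rpow_mul_pow hu hv n).const_mul _
  have hval (n : ℕ) : ∫ x in Ioo (0 : ℝ) 1, f n x =
      beta u v * (s n * (poch u n / poch (u + v) n)) := by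
    rw [integral_const_mul, integral_rpow_mul_one_sub_rpow_mul_pow hu hv, mul_left_comm]
  have hnorm (n : ℕ) : ∫ x in Ioo (0 : ℝ) 1, ‖f n x‖ =
      beta u v * |s n * (poch u n / poch (u + v) n)| := by
    rw [abs_mul, abs_of_pos (div_pos (poch_pos hu n) (poch_pos (add_pos hu hv) n)),
      mul_left_comm, ← integral_rpow_mul_one_sub_rpow_mul_pow hu hv, ← integral_const_mul]
    refine setIntegral_congr_fun measurableSet_Ioo fun x hx => ?_
    have hx₀ : 0 < x := hx.1
    have hx₁ : 0 < 1 - x := sub_pos.2 hx.2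
    simp only [f]
    rw [norm_mul, norm_eq_abs, norm_of_nonneg (by positivity)]
  have hsum : Summable fun n => ∫ x in Ioo (0 : ℝ) 1, ‖f n x‖ := by
    simpa only [hnorm] using hs.abs.mul_left (beta u v)
  rw [← tsum_mul_left]
  simp only [← hval]
  rw [integral_tsum_of_summable_integral_norm hint hsum]
  simp only [f, ← tsum_mul_left, mul_left_comm (s _)]

lemma integral_rpow_mul_one_sub_rpow_mul_F21 (hu : 0 < u) (hv : 0 < v) {a b c : ℝ}
    (hc : ∀ k : ℕ, c ≠ -k) (h : a + b < v + c) :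
    ∫ x in Ioo (0 : ℝ) 1, x ^ (u - 1) * (1 - x) ^ (v - 1) * F21 a b c x =
      beta u v * F32one a b u (u + v) c := by
  rw [F32one_eq_tsum_gaussCoeff]
  exact integral_rpow_mul_one_sub_rpow_mul_tsum hu hv (summable_gaussCoeff_mul_poch_div_poch
    (ne_neg_natCast_of_pos (add_pos hu hv)) hc (by linarith))

end BetaIntegral

theorem beta_mul_F32one_eq_beta_mul_F32one {a b c d e : ℝ} (hc : 0 < c) (hcd : c < d)
    (he : ∀ k : ℕ, e ≠ -k) (h : a + b + c < d + e) :
    beta c (d - c) * F32one a b c d e =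
      beta c (d + e - a - b - c) * F32one (e - a) (e - b) c (d + e - a - b) e := by
  have hleft := integral_rpow_mul_one_sub_rpow_mul_F21 hc (sub_pos.2 hcd) he
    (by linarith : a + b < d - c + e)
  have hright := integral_rpow_mul_one_sub_rpow_mul_F21 hc
    (by linarith : 0 < d + e - a - b - c) he
    (by linarith : e - a + (e - b) < d + e - a - b - c + e)
  rw [add_sub_cancel] at hleft hright
  rw [← hleft, ← hright]
  refine setIntegral_congr_fun measurableSet_Ioo fun x hx => ?_
  have hx₁ : |x| < 1 := abs_lt.2 ⟨by linarith [hx.1], hx.2⟩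
  have hpow : (1 - x) ^ (d + e - a - b - c - 1) =
      (1 - x) ^ (d - c - 1) * (1 - x) ^ (e - a - b) := by
    rw [← rpow_add (sub_pos.2 hx.2)]
    ring_nf
  rw [F21_euler_transformation a b he hx₁, hpow]
  ring

lemma F32one_swap (a b c d e : ℝ) : F32one a b c d e = F32one b a c d e :=
  tsum_congr fun n => by rw [mul_comm (poch a n)]

theorem F32_transformation_general {a b c d e : ℝ} (hc : 0 < c) (hcd : c < d)
    (he : ∀ k : ℕ, e ≠ -k) (h : a + b + c < d + e) :
    F32one a b c d e / (Gamma (d + e - a - b - c) * Gamma d) =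
      F32one (e - a) (e - b) c (d + e - a - b) e /
        (Gamma (d - c) * Gamma (d + e - a - b)) := by
  have hbeta := beta_mul_F32one_eq_beta_mul_F32one hc hcd he h
  simp only [beta, add_sub_cancel] at hbeta
  have := Gamma_pos_of_pos hc
  have := Gamma_pos_of_pos (sub_pos.2 hcd)
  have := Gamma_pos_of_pos (hc.trans hcd)
  have := Gamma_pos_of_pos (by linarith : 0 < d + e - a - b - c)
  have := Gamma_pos_of_pos (by linarith : 0 < d + e - a - b)
  field_simp at hbeta ⊢
  linear_combination hbeta

theorem F32_transformation (a a' b t : ℝ) (ha : 0 < a) (ha' : 0 < a') (hb : 0 < b)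
    (hta : 0 < t + a) (htb : 0 < t + b) :
    F32one (a + t) a b (t + a + b) (a + a') / (Real.Gamma a' * Real.Gamma (a + b + t)) =
      F32one a' (a' - t) b (a' + b) (a + a') /
        (Real.Gamma (a + t) * Real.Gamma (a' + b)) := by
  rw [F32one_swap a']
  convert F32_transformation_general hb (by linarith : b < t + a + b)
    (ne_neg_natCast_of_pos (add_pos ha ha'))
    (by linarith : a + t + a + b < t + a + b + (a + a')) using 3 <;> ring_nf
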